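/- Let φ : ℂ → ℂ^m be a map each of whose components is a polynomial of degree at most s, with φ(1) ≠ 0. Let f be a holomorphic map from the open unit disc D into ℂ^m, continuous on the closed unit disc, such that |f(ζ)| ≤ |φ(ζ)| for all ζ on the unit circle ∂D and f(ζ) = φ(ζ) + o(|ζ − 1|^{2s+1}) as ζ → 1 within D. Then f ≡ φ on D. -/

import Mathlib

open Metric Filter

/-!
Write `φ ζ = ∑ ζ ^ j c_j`. On the unit circle `|f| ≤ |φ|` gives
`‖φ - f‖² ≤ 2 Re ⟪φ, φ - f⟫`, and `ζ ^ s ⟪φ ζ, v⟫ = ∑ ζ ^ (s - j) ⟪c_j, v⟫` is the boundary value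
of a function that is holomorphic in `ζ`. Taking `v = φ ζ - f ζ`, one obtains a holomorphic function
`g` with `g = o(|ζ - 1| ^ (2s + 1))` at `1` and `Re (ζ⁻ˢ g) ≥ 0` on the circle. There
`(ζ - 1) ^ 2` is `-ζ` times a nonnegative number, so `k = (-1) ^ s g / (ζ - 1) ^ (2s)` has
nonnegative real part on the circle, hence in the disc. Since `k = o(|ζ - 1|)`, a Harnack
inequality forces `k = 0`. Then `Re ⟪φ, φ - f⟫ = 0` on the circle, so `f = φ` there.
-/

open Asymptotics Set Topology

section RealPart

variable {f : ℂ → ℂ} {R : ℝ}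

lemma norm_mul_sub_norm_le_of_re_nonneg {z : ℂ} (hf : DifferentiableOn ℂ f (ball 0 R))
    (hre : ∀ w ∈ ball 0 R, 0 ≤ (f w).re) (hz : z ∈ ball 0 R) :
    ‖f z‖ * (R - ‖z‖) ≤ ‖f 0‖ * (R + ‖z‖) := by
  have hR : 0 < R := pos_of_mem_ball hz
  have hzR : 0 < R - ‖z‖ := sub_pos.2 (mem_ball_zero_iff.1 hz)
  refine le_of_forall_pos_le_add fun ε hε ↦ ?_
  have hM : 0 < ε / (2 * R) := by positivity
  have hBC := Complex.borelCaratheodory hM hf.neg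
    (fun w hw ↦ by simpa using (neg_nonpos.2 (hre w hw)).trans hM.le) hR hz
  rw [Pi.neg_apply, Pi.neg_apply, norm_neg, norm_neg, ← add_div, le_div_iff₀ hzR] at hBC
  have hε' : 2 * (ε / (2 * R)) * ‖z‖ ≤ ε := calc
    2 * (ε / (2 * R)) * ‖z‖ ≤ 2 * (ε / (2 * R)) * R := by gcongr; linarith
    _ = ε := by field_simp
  linarith

lemma norm_zero_mul_sub_norm_le_of_re_nonneg {z : ℂ} (hf : DifferentiableOn ℂ f (ball 0 R))
    (hre : ∀ w ∈ ball 0 R, 0 ≤ (f w).re) (hz : z ∈ ball 0 R) :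
    ‖f 0‖ * (R - ‖z‖) ≤ ‖f z‖ * (R + ‖z‖) := by
  have hR : 0 < R := pos_of_mem_ball hz
  -- The upper bound applies to `(f + ε)⁻¹`, which has positive real part.
  have hshift : ∀ ε : ℝ, 0 < ε → ‖f 0 + ε‖ * (R - ‖z‖) ≤ ‖f z + ε‖ * (R + ‖z‖) := by
    intro ε hε
    have hpos : ∀ w ∈ ball 0 R, 0 < (f w + ε).re := fun w hw ↦ by
      simpa using add_pos_of_nonneg_of_pos (hre w hw) hε
    have hne : ∀ w ∈ ball 0 R, f w + ε ≠ 0 := fun w hw h ↦ by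
      simpa [h] using hpos w hw
    have hinv := norm_mul_sub_norm_le_of_re_nonneg ((hf.add_const (ε : ℂ)).inv hne)
      (fun w hw ↦ by
        rw [Pi.inv_apply, Complex.inv_re]
        exact div_nonneg (hpos w hw).le (Complex.normSq_nonneg _)) hz
    have h0 : 0 < ‖f 0 + ε‖ := norm_pos_iff.2 (hne 0 (mem_ball_self hR))
    have hz0 : 0 < ‖f z + ε‖ := norm_pos_iff.2 (hne z hz)
    rw [Pi.inv_apply, Pi.inv_apply, norm_inv, norm_inv, inv_mul_le_iff₀ hz0,
      mul_left_comm, ← div_eq_inv_mul, le_div_iff₀ h0] at hinv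
    linarith
  have hlim : ∀ w, Tendsto (fun ε : ℝ ↦ ‖f w + ε‖) (𝓝[>] 0) (𝓝 ‖f w‖) := fun w ↦
    (Continuous.tendsto' (by fun_prop) _ _ (by simp)).mono_left nhdsWithin_le_nhds
  exact le_of_tendsto_of_tendsto ((hlim 0).mul_const _) ((hlim z).mul_const _)
    (eventually_nhdsWithin_of_forall hshift)

lemma tendsto_smul_nhdsLT_one_nhdsWithin_ball {E : Type*} [NormedAddCommGroup E]
    [NormedSpace ℝ E] {a : E} (ha : a ≠ 0) :
    Tendsto (fun t : ℝ ↦ t • a) (𝓝[<] 1) (𝓝[ball 0 ‖a‖] a) := by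
  have hcont : Continuous fun t : ℝ ↦ t • a := by fun_prop
  refine tendsto_nhdsWithin_iff.2
    ⟨(hcont.tendsto' 1 a (one_smul ℝ a)).mono_left nhdsWithin_le_nhds, ?_⟩
  filter_upwards [Ioo_mem_nhdsLT zero_lt_one] with t ht
  rw [mem_ball_zero_iff, norm_smul, Real.norm_of_nonneg ht.1.le]
  exact mul_lt_of_lt_one_left (norm_pos_iff.2 ha) ht.2

lemma eqOn_zero_of_re_nonneg_of_isLittleO {a : ℂ} (hf : DifferentiableOn ℂ f (ball 0 ‖a‖))
    (hre : ∀ w ∈ ball 0 ‖a‖, 0 ≤ (f w).re) (ho : f =o[𝓝[ball 0 ‖a‖] a] fun w ↦ w - a) :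
    EqOn f 0 (ball 0 ‖a‖) := by
  intro z hz
  have ha : 0 < ‖a‖ := pos_of_mem_ball hz
  have hradial := tendsto_smul_nhdsLT_one_nhdsWithin_ball (norm_pos_iff.1 ha)
  have h0 : ‖f 0‖ ≤ 0 := by
    refine le_of_forall_pos_le_add fun ε hε ↦ ?_
    have hsmall := hradial.eventually (ho.def (show 0 < ε / (2 * ‖a‖) by positivity))
    obtain ⟨t, hft, hta, ht⟩ := (hsmall.and ((hradial.eventually self_mem_nhdsWithin).and
      (Ioo_mem_nhdsLT zero_lt_one))).exists
    have hnorm : ‖t • a‖ = t * ‖a‖ := by rw [norm_smul, Real.norm_of_nonneg ht.1.le]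
    have hdist : ‖t • a - a‖ = ‖a‖ - ‖t • a‖ := by
      have hfactor : a - t • a = (1 - t) • a := by rw [sub_smul, one_smul]
      rw [hnorm, norm_sub_rev, hfactor, norm_smul, Real.norm_of_nonneg (sub_nonneg.2 ht.2.le),
        one_sub_mul]
    have hgap : 0 < ‖a‖ - ‖t • a‖ := sub_pos.2 (mem_ball_zero_iff.1 hta)
    rw [hdist] at hft
    refine le_of_mul_le_mul_right ?_ hgap
    calc ‖f 0‖ * (‖a‖ - ‖t • a‖) ≤ ‖f (t • a)‖ * (‖a‖ + ‖t • a‖) :=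
          norm_zero_mul_sub_norm_le_of_re_nonneg hf hre hta
      _ ≤ ε / (2 * ‖a‖) * (‖a‖ - ‖t • a‖) * (2 * ‖a‖) := by gcongr; linarith
      _ = (0 + ε) * (‖a‖ - ‖t • a‖) := by field_simp; ring
  have hupper := norm_mul_sub_norm_le_of_re_nonneg hf hre hz
  rw [norm_le_zero_iff.1 h0, norm_zero, zero_mul] at hupper
  exact norm_le_zero_iff.1
    (nonpos_of_mul_nonpos_left hupper (sub_pos.2 (mem_ball_zero_iff.1 hz)))

lemma re_nonneg_of_forall_mem_frontier_re_nonneg {E : Type*} [NormedAddCommGroup E]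
    [NormedSpace ℂ E] [Nontrivial E] {U : Set E} (hU : Bornology.IsBounded U) {g : E → ℂ}
    (hg : DiffContOnCl ℂ g U) (hre : ∀ z ∈ frontier U, 0 ≤ (g z).re) {z : E}
    (hz : z ∈ closure U) : 0 ≤ (g z).re := by
  have hexp : DiffContOnCl ℂ (fun w ↦ Complex.exp (-g w)) U :=
    Complex.differentiable_exp.comp_diffContOnCl hg.neg
  have hle := Complex.norm_le_of_forall_mem_frontier_norm_le hU hexp (C := 1)
    (fun w hw ↦ by simpa [Complex.norm_exp] using hre w hw) hz
  simpa [Complex.norm_exp] using hle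

end RealPart

section BoundaryZero

lemma isLittleO_nhdsWithin_closure {X E F : Type*} [TopologicalSpace X]
    [SeminormedAddCommGroup E] [SeminormedAddCommGroup F] {S : Set X} {a : X} {g : X → E}
    {h : X → F} (hg : ContinuousOn g (closure S)) (hh : ContinuousOn h (closure S))
    (ho : g =o[𝓝[S] a] h) :
    g =o[𝓝[closure S] a] h := by
  refine IsLittleO.of_bound fun c hc ↦ ?_
  obtain ⟨V, hVopen, haV, hV⟩ := mem_nhdsWithin.1 (ho.def hc)
  filter_upwards [inter_mem_nhdsWithin (closure S) (hVopen.mem_nhds haV)] with x hx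
  have hsub : V ∩ S ⊆ closure S := inter_subset_right.trans subset_closure
  exact ContinuousWithinAt.closure_le (hVopen.inter_closure hx.symm)
    ((hg x hx.1).mono hsub).norm (((hh x hx.1).mono hsub).norm.const_mul c) hV

lemma isLittleO_clm_apply {𝕜 X E F G : Type*} [NontriviallyNormedField 𝕜] [NormedAddCommGroup E]
    [NormedSpace 𝕜 E] [NormedAddCommGroup F] [NormedSpace 𝕜 F] [SeminormedAddCommGroup G]
    {l : Filter X} {L : X → E →L[𝕜] F} {v : X → E} {h : X → G} (hL : L =O[l] fun _ ↦ (1 : ℝ))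
    (hv : v =o[l] h) :
    (fun x ↦ L x (v x)) =o[l] h := by
  refine (isBoundedBilinearMap_apply (𝕜 := 𝕜)).isBigO_comp.trans_isLittleO ?_
  simpa only [one_mul, isLittleO_norm_right] using hL.norm_left.mul_isLittleO hv.norm_norm

lemma isLittleO_sub_pow_iff_tendsto_norm_div {𝕜 E : Type*} [NormedField 𝕜]
    [SeminormedAddCommGroup E] {l : Filter 𝕜} {a : 𝕜} {n : ℕ} {g : 𝕜 → E}
    (hl : ∀ᶠ z in l, z ≠ a) :
    g =o[l] (fun z ↦ (z - a) ^ n) ↔ Tendsto (fun z ↦ ‖g z‖ / ‖z - a‖ ^ n) l (𝓝 0) := by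
  rw [← isLittleO_norm_norm, isLittleO_iff_tendsto']
  · simp only [norm_pow]
  · filter_upwards [hl] with z hz hzero
    exact absurd hzero (norm_ne_zero_iff.2 (pow_ne_zero n (sub_ne_zero.2 hz)))

lemma isLittleO_div_sub_pow {𝕜 : Type*} [NormedField 𝕜] {l : Filter 𝕜} {a : 𝕜} {n m : ℕ}
    {g : 𝕜 → 𝕜} (hl : ∀ᶠ z in l, z ≠ a) (ho : g =o[l] fun z ↦ (z - a) ^ (n + m)) :
    (fun z ↦ g z / (z - a) ^ n) =o[l] fun z ↦ (z - a) ^ m := by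
  have hmul := ho.mul_isBigO (isBigO_refl (fun z ↦ ((z - a) ^ n)⁻¹) l)
  refine (hmul.congr_left fun z ↦ (div_eq_mul_inv _ _).symm).congr' EventuallyEq.rfl ?_
  filter_upwards [hl] with z hz
  have := sub_ne_zero.2 hz
  field_simp
  ring

lemma diffContOnCl_div_sub_pow {U : Set ℂ} {a : ℂ} {n : ℕ} {g : ℂ → ℂ} (ha : a ∉ U)
    (hg : DiffContOnCl ℂ g U) (ho : g =o[𝓝[U] a] fun z ↦ (z - a) ^ n) :
    DiffContOnCl ℂ (fun z ↦ g z / (z - a) ^ n) U := by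
  refine ⟨hg.differentiableOn.div (by fun_prop) fun z hz ↦
    pow_ne_zero _ (sub_ne_zero.2 (ne_of_mem_of_not_mem hz ha)), fun z hz ↦ ?_⟩
  by_cases hza : z = a
  · -- At `a` the quotient is `0`: for `0 < n` because `x / 0 = 0`, for `n = 0` because `ho`
    -- extends to the closure and forces `g a = 0`.
    subst hza
    have hlim := (isLittleO_nhdsWithin_closure hg.continuousOn
      (by fun_prop) ho).tendsto_div_nhds_zero
    have hval := tendsto_nhds_unique (tendsto_pure_nhds _ _)
      (hlim.mono_left (pure_le_nhdsWithin hz))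
    rwa [ContinuousWithinAt, hval]
  · exact (hg.continuousOn z hz).div (by fun_prop) (pow_ne_zero _ (sub_ne_zero.2 hza))

lemma sub_one_pow_two_mul_of_norm_eq_one {z : ℂ} (hz : ‖z‖ = 1) (s : ℕ) :
    (z - 1) ^ (2 * s) = (-1) ^ s * z ^ s * ((‖z - 1‖ ^ (2 * s) : ℝ) : ℂ) := by
  have hconj : z * starRingEnd ℂ z = 1 := by simp [Complex.mul_conj', hz]
  have hsq : (z - 1) ^ 2 = -1 * z * ((‖z - 1‖ ^ 2 : ℝ) : ℂ) := by
    rw [Complex.ofReal_pow, ← Complex.mul_conj', map_sub, map_one]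
    linear_combination (z - 1) * hconj
  rw [pow_mul, hsq, pow_mul, mul_pow, mul_pow, Complex.ofReal_pow (_ ^ 2)]

lemma neg_one_pow_mul_div_sub_one_pow_of_norm_eq_one {z : ℂ} (hz : ‖z‖ = 1) (s : ℕ) (w : ℂ) :
    (-1) ^ s * w / (z - 1) ^ (2 * s) = (z ^ s)⁻¹ * w / ((‖z - 1‖ ^ (2 * s) : ℝ) : ℂ) := by
  rw [sub_one_pow_two_mul_of_norm_eq_one hz, mul_assoc,
    mul_div_mul_left _ _ (pow_ne_zero _ (by norm_num)), div_mul_eq_div_div, div_eq_inv_mul w]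

lemma eqOn_zero_of_re_inv_pow_mul_nonneg_of_isLittleO {s : ℕ} {g : ℂ → ℂ}
    (hg : DiffContOnCl ℂ g (ball 0 1)) (hre : ∀ z ∈ sphere (0 : ℂ) 1, 0 ≤ ((z ^ s)⁻¹ * g z).re)
    (ho : g =o[𝓝[ball 0 1] 1] fun z ↦ (z - 1) ^ (2 * s + 1)) : EqOn g 0 (closedBall 0 1) := by
  have h1 : (1 : ℂ) ∉ ball (0 : ℂ) 1 := by simp
  have hne : ∀ z ∈ ball (0 : ℂ) 1, z ≠ 1 := fun z hz ↦ ne_of_mem_of_not_mem hz h1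
  have hnhds : ∀ᶠ z in 𝓝[ball (0 : ℂ) 1] 1, z ≠ 1 := eventually_nhdsWithin_of_forall hne
  set k : ℂ → ℂ := fun z ↦ (-1) ^ s * g z / (z - 1) ^ (2 * s) with hk
  have hko : k =o[𝓝[ball 0 1] 1] fun z ↦ z - 1 := by
    simpa using isLittleO_div_sub_pow hnhds (ho.const_mul_left ((-1) ^ s))
  have hpow : (fun z : ℂ ↦ (z - 1) ^ (2 * s + 1)) =o[𝓝[ball 0 1] 1] fun z ↦ (z - 1) ^ (2 * s) :=
    isLittleO_norm_norm.1 <| by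
      simpa only [norm_pow] using
        (isLittleO_pow_sub_pow_sub (1 : ℂ) (2 * s).lt_succ_self).mono nhdsWithin_le_nhds
  have hkd : DiffContOnCl ℂ k (ball 0 1) :=
    diffContOnCl_div_sub_pow h1 (hg.const_smul ((-1 : ℂ) ^ s))
      ((ho.trans hpow).const_mul_left ((-1) ^ s))
  have hksphere : ∀ z ∈ frontier (ball (0 : ℂ) 1), 0 ≤ (k z).re := by
    intro z hz
    rw [frontier_ball _ one_ne_zero] at hz
    simp only [hk]
    rw [neg_one_pow_mul_div_sub_one_pow_of_norm_eq_one (mem_sphere_zero_iff_norm.1 hz),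
      Complex.div_ofReal_re]
    exact div_nonneg (hre z hz) (by positivity)
  have hkball : EqOn k 0 (ball 0 1) := by
    have hzero := eqOn_zero_of_re_nonneg_of_isLittleO (f := k) (a := 1)
    rw [norm_one] at hzero
    exact hzero hkd.differentiableOn (fun z hz ↦ re_nonneg_of_forall_mem_frontier_re_nonneg
      isBounded_ball hkd hksphere (subset_closure hz)) hko
  have hgball : EqOn g 0 (ball 0 1) := fun z hz ↦ by
    have hz1 := sub_ne_zero.2 (hne z hz)
    simpa [hk, hz1] using hkball hz
  rw [← closure_ball _ one_ne_zero]
  exact hgball.of_subset_closure hg.continuousOn continuousOn_const subset_closure subset_rfl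

end BoundaryZero

section Reflection

lemma norm_sub_sq_le_two_mul_re_inner_sub {𝕜 E : Type*} [RCLike 𝕜] [SeminormedAddCommGroup E]
    [InnerProductSpace 𝕜 E] {u v : E} (h : ‖v‖ ≤ ‖u‖) :
    ‖u - v‖ ^ 2 ≤ 2 * RCLike.re (inner 𝕜 u (u - v)) := by
  have hexpand := norm_sub_sq (𝕜 := 𝕜) u (u - v)
  rw [sub_sub_cancel] at hexpand
  have := pow_le_pow_left₀ (norm_nonneg v) h 2
  linarith

variable {E : Type*} [NormedAddCommGroup E] [InnerProductSpace ℂ E]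

/-- The polynomial map `ζ ↦ ∑ ζ ^ j c_j`, `j ≤ s`, with vector coefficients. The coefficients are
indexed by `ℕ`, and those with index above `s` are ignored. -/
def polynomialMap (s : ℕ) (c : ℕ → E) (ζ : ℂ) : E :=
  ∑ j ∈ Finset.range (s + 1), ζ ^ j • c j

/-- The reflection in the unit circle of `polynomialMap s c`: the functional-valued polynomial map
`ζ ↦ ∑ ζ ^ (s - j) ⟪c_j, ·⟫`, `j ≤ s`, which extends `ζ ^ s ⟪polynomialMap s c ζ, ·⟫`
holomorphically from the circle to the plane. -/
noncomputable def reflectedPolynomialMap (s : ℕ) (c : ℕ → E) (ζ : ℂ) : E →L[ℂ] ℂ :=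
  ∑ j ∈ Finset.range (s + 1), ζ ^ (s - j) • innerSL ℂ (c j)

lemma exists_eq_polynomialMap_of_natDegree_le {ι : Type*} [Fintype ι] {s : ℕ}
    {P : ι → Polynomial ℂ} (hdeg : ∀ i, (P i).natDegree ≤ s) {φ : ℂ → EuclideanSpace ℂ ι}
    (hφ : ∀ ζ i, φ ζ i = (P i).eval ζ) : ∃ c, φ = polynomialMap s c := by
  refine ⟨fun j ↦ WithLp.toLp 2 fun i ↦ (P i).coeff j, ?_⟩
  ext ζ i
  rw [hφ, Polynomial.eval_eq_sum_range' (Nat.lt_succ_of_le (hdeg i))]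
  simp [polynomialMap, mul_comm]

lemma differentiable_polynomialMap (s : ℕ) (c : ℕ → E) :
    Differentiable ℂ (polynomialMap s c) := by
  unfold polynomialMap
  fun_prop

lemma differentiable_reflectedPolynomialMap (s : ℕ) (c : ℕ → E) :
    Differentiable ℂ (reflectedPolynomialMap s c) := by
  unfold reflectedPolynomialMap
  fun_prop

lemma reflectedPolynomialMap_apply_of_norm_eq_one (s : ℕ) (c : ℕ → E) {ζ : ℂ} (hζ : ‖ζ‖ = 1)
    (v : E) : reflectedPolynomialMap s c ζ v = ζ ^ s * inner ℂ (polynomialMap s c ζ) v := by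
  have hconj : ζ * starRingEnd ℂ ζ = 1 := by simp [Complex.mul_conj', hζ]
  simp only [reflectedPolynomialMap, polynomialMap, sum_apply, sum_inner,
    inner_smul_left, Finset.mul_sum]
  refine Finset.sum_congr rfl fun j hj ↦ ?_
  have hpow : ζ ^ s * starRingEnd ℂ (ζ ^ j) = ζ ^ (s - j) := by
    rw [← Nat.sub_add_cancel (Finset.mem_range_succ_iff.1 hj), pow_add, map_pow, mul_assoc,
      ← mul_pow, hconj, one_pow, mul_one, Nat.add_sub_cancel]
  rw [← mul_assoc, hpow]
  simp

lemma inner_polynomialMap_eq_inv_pow_mul_of_norm_eq_one (s : ℕ) (c : ℕ → E) {ζ : ℂ}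
    (hζ : ‖ζ‖ = 1) (v : E) :
    inner ℂ (polynomialMap s c ζ) v = (ζ ^ s)⁻¹ * reflectedPolynomialMap s c ζ v := by
  have hζ0 : ζ ≠ 0 := norm_ne_zero_iff.1 (hζ ▸ one_ne_zero)
  rw [reflectedPolynomialMap_apply_of_norm_eq_one s c hζ, inv_mul_cancel_left₀ (pow_ne_zero s hζ0)]

lemma inner_polynomialMap_eq_zero_of_re_nonneg_of_isLittleO {s : ℕ} {c : ℕ → E} {v : ℂ → E}
    (hv : DiffContOnCl ℂ v (ball 0 1))
    (hre : ∀ ζ ∈ sphere (0 : ℂ) 1, 0 ≤ (inner ℂ (polynomialMap s c ζ) (v ζ)).re)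
    (ho : v =o[𝓝[ball 0 1] 1] fun ζ ↦ (ζ - 1) ^ (2 * s + 1)) :
    ∀ ζ ∈ sphere (0 : ℂ) 1, inner ℂ (polynomialMap s c ζ) (v ζ) = 0 := by
  have hL := differentiable_reflectedPolynomialMap s c
  have hbdd : reflectedPolynomialMap s c =O[𝓝[ball 0 1] 1] fun _ ↦ (1 : ℝ) :=
    (hL.continuous.continuousAt.isBigO_one ℝ).mono nhdsWithin_le_nhds
  have hzero : EqOn (fun ζ ↦ reflectedPolynomialMap s c ζ (v ζ)) 0 (closedBall 0 1) := by
    refine eqOn_zero_of_re_inv_pow_mul_nonneg_of_isLittleO (s := s)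
      ⟨hL.differentiableOn.clm_apply hv.differentiableOn,
        hL.continuous.continuousOn.clm_apply hv.continuousOn⟩
      (fun ζ hζ ↦ ?_) (isLittleO_clm_apply hbdd ho)
    rw [← inner_polynomialMap_eq_inv_pow_mul_of_norm_eq_one s c (mem_sphere_zero_iff_norm.1 hζ)]
    exact hre ζ hζ
  intro ζ hζ
  rw [inner_polynomialMap_eq_inv_pow_mul_of_norm_eq_one s c (mem_sphere_zero_iff_norm.1 hζ)]
  exact mul_eq_zero_of_right _ (hzero (sphere_subset_closedBall hζ))

theorem rigidity_disc_vector_valued_general {s : ℕ} {c : ℕ → E} {f : ℂ → E}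
    (hf : DiffContOnCl ℂ f (ball 0 1))
    (hle : ∀ ζ ∈ sphere (0 : ℂ) 1, ‖f ζ‖ ≤ ‖polynomialMap s c ζ‖)
    (ho : (fun ζ ↦ f ζ - polynomialMap s c ζ) =o[𝓝[ball 0 1] 1] fun ζ ↦ (ζ - 1) ^ (2 * s + 1)) :
    EqOn f (polynomialMap s c) (closedBall 0 1) := by
  have hφ : DiffContOnCl ℂ (polynomialMap s c) (ball 0 1) :=
    (differentiable_polynomialMap s c).diffContOnCl
  have hpolar : ∀ ζ ∈ sphere (0 : ℂ) 1, ‖polynomialMap s c ζ - f ζ‖ ^ 2 ≤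
      2 * (inner ℂ (polynomialMap s c ζ) (polynomialMap s c ζ - f ζ)).re :=
    fun ζ hζ ↦ norm_sub_sq_le_two_mul_re_inner_sub (𝕜 := ℂ) (hle ζ hζ)
  have hsub : DiffContOnCl ℂ (fun ζ ↦ polynomialMap s c ζ - f ζ) (ball 0 1) := hφ.sub hf
  have hinner := inner_polynomialMap_eq_zero_of_re_nonneg_of_isLittleO hsub
    (fun ζ hζ ↦ by linarith [hpolar ζ hζ, sq_nonneg ‖polynomialMap s c ζ - f ζ‖])
    (by simpa only [neg_sub] using ho.neg_left)
  have hsphere : EqOn f (polynomialMap s c) (sphere 0 1) := fun ζ hζ ↦ by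
    have hnorm := hpolar ζ hζ
    rw [hinner ζ hζ, Complex.zero_re, mul_zero, sq_nonpos_iff, norm_eq_zero, sub_eq_zero] at hnorm
    exact hnorm.symm
  rw [← closure_ball _ one_ne_zero]
  exact Complex.eqOn_closure_of_eqOn_frontier isBounded_ball hf hφ
    (by rwa [frontier_ball _ one_ne_zero])

end Reflection

/-- **One-variable vector-valued rigidity.** Let `φ : ℂ → ℂ^m` have polynomial
components of degree at most `s`, with `φ(1) ≠ 0`. If `f` is holomorphic on the unit
disc with values in `ℂ^m`, continuous on the closed disc, satisfies `|f(ζ)| ≤ |φ(ζ)|`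
on the unit circle and `f(ζ) = φ(ζ) + o(|ζ - 1|^(2s+1))` as `ζ → 1` within the disc,
then `f ≡ φ` on the disc. -/
theorem rigidity_disc_vector_valued
    (m s : ℕ) (φ f : ℂ → EuclideanSpace ℂ (Fin m))
    (P : Fin m → Polynomial ℂ)
    (hdeg : ∀ i, (P i).natDegree ≤ s)
    (hφP : ∀ (ζ : ℂ) (i : Fin m), φ ζ i = (P i).eval ζ)
    (hφ1 : φ 1 ≠ 0)
    (hfd : DifferentiableOn ℂ f (ball (0 : ℂ) 1))
    (hfc : ContinuousOn f (closedBall (0 : ℂ) 1))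
    (hle : ∀ ζ ∈ sphere (0 : ℂ) 1, ‖f ζ‖ ≤ ‖φ ζ‖)
    (ho : Tendsto (fun ζ => ‖f ζ - φ ζ‖ / ‖ζ - 1‖ ^ (2 * s + 1))
      (nhdsWithin (1 : ℂ) (ball (0 : ℂ) 1)) (nhds 0)) :
    Set.EqOn f φ (ball (0 : ℂ) 1) := by
  obtain ⟨c, rfl⟩ := exists_eq_polynomialMap_of_natDegree_le hdeg hφP
  have hne : ∀ᶠ ζ in 𝓝[ball (0 : ℂ) 1] 1, ζ ≠ 1 :=
    eventually_nhdsWithin_of_forall fun ζ hζ ↦ ne_of_mem_of_not_mem hζ (by simp)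
  exact (rigidity_disc_vector_valued_general ⟨hfd, by rwa [closure_ball _ one_ne_zero]⟩ hle
    ((isLittleO_sub_pow_iff_tendsto_norm_div hne).2 ho)).mono ball_subset_closedBall
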